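/- arXiv:2410.08073 — 6 statements merged into one kernel-verified Lean document; each statement's English description precedes it below -/
import Mathlib

section
/- Fix integers n ≥ 1 and t ≥ 1, and let x, x′ : Fin t → 𝔽₂ⁿ be two t-tuples of n-bit strings that are NOT equal as multisets (i.e., there is no permutation σ of Fin t with x′ = x ∘ σ). Then the number of a ∈ 𝔽₂ⁿ satisfying ∑_{j=1}^{t} χ(a, x_j) = ∑_{j=1}^{t} χ(a, x′_j) (sums taken in ℤ) is at most (1 − 1/(2t))·2ⁿ; equivalently, 2t · #{a ∈ 𝔽₂ⁿ : ∑_j χ(a, x_j) = ∑_j χ(a, x′_j)} ≤ (2t − 1)·2ⁿ. -/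
/-- The integer-valued character `χ(a, x) = (-1)^{⟨a,x⟩}` on `𝔽₂ⁿ`. -/
def chi {ι : Type*} [Fintype ι] (a x : ι → ZMod 2) : ℤ :=
  if ∑ i, a i * x i = 0 then 1 else -1

/-!
The difference of the two character sums is a function `f` on the group whose Fourier coefficients
are the differences of the multiplicities. These are integers and not all zero, so some coefficient
has absolute value at least `1`. On the other hand `|f|` is at most the total number of characters
involved, hence a Fourier coefficient can only be that large if `f` has large support.
-/

section CharacterSums

open Finset

variable {G R : Type*}

section Orthogonality

variable [AddCommGroup G] [Fintype G] [CommSemiring R] [IsDomain R] [DecidableEq (AddChar G R)]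

theorem sum_addChar_mul_neg (φ ψ : AddChar G R) :
    ∑ a, φ a * ψ (-a) = if φ = ψ then (Fintype.card G : R) else 0 := by
  simpa only [AddChar.sub_apply, sub_eq_zero] using AddChar.sum_eq_ite (φ - ψ)

theorem sum_multisetSum_addChar_mul_neg (M : Multiset (AddChar G R)) (ψ : AddChar G R) :
    ∑ a, (M.map (· a)).sum * ψ (-a) = M.count ψ * (Fintype.card G : R) := by
  induction M using Multiset.induction_on with
  | empty => simp
  | cons φ M ih =>
    simp only [Multiset.map_cons, Multiset.sum_cons, add_mul, sum_add_distrib, ih,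
      sum_addChar_mul_neg, Multiset.count_cons, eq_comm (a := ψ)]
    split_ifs <;> push_cast <;> ring

end Orthogonality

theorem norm_multisetSum_addChar_le [AddLeftCancelMonoid G] [Finite G] [NormedRing R]
    [NormMulClass R] [NormOneClass R] (M : Multiset (AddChar G R)) (a : G) :
    ‖(M.map (· a)).sum‖ ≤ M.card := by
  simpa using norm_multiset_sum_le (M.map (· a))

theorem norm_sum_mul_le_card_ne_zero_mul {α : Type*} [Fintype α] [NonUnitalSeminormedRing R]
    [DecidableEq R] {f g : α → R} {C : ℝ} (hf : ∀ a, ‖f a‖ ≤ C) (hg : ∀ a, ‖g a‖ ≤ 1) :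
    ‖∑ a, f a * g a‖ ≤ #{a | f a ≠ 0} * C := by
  have norm_mul_le_C (a : α) : ‖f a * g a‖ ≤ C :=
    (norm_mul_le _ _).trans <|
      (mul_le_of_le_one_right (norm_nonneg _) (hg a)).trans (hf a)
  calc ‖∑ a, f a * g a‖
      = ‖∑ a with f a ≠ 0, f a * g a‖ := by
        rw [sum_filter_of_ne fun a _ h ↦ left_ne_zero_of_mul h]
    _ ≤ ∑ a with f a ≠ 0, C := norm_sum_le_of_le _ fun a _ ↦ norm_mul_le_C a
    _ = #{a | f a ≠ 0} * C := by rw [sum_const, nsmul_eq_mul]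

variable [AddCommGroup G] [Fintype G] [NormedCommRing R] [NormMulClass R] [NormOneClass R]

-- `NormSMulClass ℤ R` excludes `p`-adic norms, where nonzero integers can be small; the rings `ℤ`,
-- `ℝ` and `ℂ` all qualify.
variable [NormSMulClass ℤ R]

theorem card_le_mul_card_multisetSum_addChar_ne [DecidableEq R] {M M' : Multiset (AddChar G R)}
    (h : M ≠ M') :
    Fintype.card G ≤
      (M.card + M'.card) * #{a : G | (M.map (· a)).sum ≠ (M'.map (· a)).sum} := by
  classical
  have : Nontrivial R := NormOneClass.nontrivial
  have : IsDomain R := NoZeroDivisors.to_isDomain R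
  obtain ⟨ψ, hψ⟩ : ∃ ψ, M.count ψ ≠ M'.count ψ := by
    simpa only [ne_eq, Multiset.ext, not_forall] using h
  let f : G → R := fun a ↦ (M.map (· a)).sum - (M'.map (· a)).sum
  have norm_f_le (a : G) : ‖f a‖ ≤ M.card + M'.card :=
    (norm_sub_le _ _).trans <|
      add_le_add (norm_multisetSum_addChar_le M a) (norm_multisetSum_addChar_le M' a)
  have fourier_coeff : ∑ a, f a * ψ (-a) =
      ((M.count ψ - M'.count ψ : ℤ) : R) * ((Fintype.card G : ℤ) : R) := by
    simp only [f, sub_mul, sum_sub_distrib, sum_multisetSum_addChar_mul_neg]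
    push_cast
    ring
  have norm_card : ‖((Fintype.card G : ℤ) : R)‖ = Fintype.card G := by simp
  have one_le_norm_count_sub : 1 ≤ ‖((M.count ψ - M'.count ψ : ℤ) : R)‖ := by
    rw [norm_intCast_eq_abs_mul_norm_one, norm_one, mul_one]
    exact_mod_cast Int.one_le_abs (show (M.count ψ - M'.count ψ : ℤ) ≠ 0 by omega)
  have bound : (Fintype.card G : ℝ) ≤ #{a | f a ≠ 0} * (M.card + M'.card : ℝ) :=
    calc (Fintype.card G : ℝ)
        ≤ ‖((M.count ψ - M'.count ψ : ℤ) : R)‖ * Fintype.card G :=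
          le_mul_of_one_le_left (Nat.cast_nonneg _) one_le_norm_count_sub
      _ = ‖∑ a, f a * ψ (-a)‖ := by rw [fourier_coeff, norm_mul, norm_card]
      _ ≤ #{a | f a ≠ 0} * (M.card + M'.card : ℝ) :=
          norm_sum_mul_le_card_ne_zero_mul norm_f_le fun a ↦ (ψ.norm_apply (-a)).le
  simp only [f, sub_ne_zero, mul_comm (Nat.cast _)] at bound
  exact_mod_cast bound

theorem stmt0_general [DecidableEq R] {M M' : Multiset (AddChar G R)} (h : M ≠ M') :
    (M.card + M'.card) * #{a : G | (M.map (· a)).sum = (M'.map (· a)).sum} ≤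
      (M.card + M'.card - 1) * Fintype.card G := by
  have card_add := card_filter_add_card_filter_not (s := (univ : Finset G))
    fun a ↦ (M.map (· a)).sum = (M'.map (· a)).sum
  rw [Nat.sub_one_mul, ← card_univ, ← card_add, mul_add, card_add, card_univ]
  have := card_le_mul_card_multisetSum_addChar_ne h
  simp only [ne_eq] at this
  omega

end CharacterSums

theorem exists_equiv_eq_comp_of_map_univ_eq {α β γ : Type*} [Fintype α] [Fintype β]
    {f : α → γ} {g : β → γ}
    (h : Finset.univ.val.map f = Finset.univ.val.map g) : ∃ e : α ≃ β, f = g ∘ e := by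
  classical
  have card_fiber_eq (c : γ) : Fintype.card {a // f a = c} = Fintype.card {b // g b = c} := by
    have count_eq := congrArg (Multiset.count c) h
    simp only [Multiset.count_map, eq_comm (a := c)] at count_eq
    rw [Fintype.card_subtype, Fintype.card_subtype]
    exact count_eq
  let e := Equiv.ofFiberEquiv fun c ↦ Fintype.equivOfCardEq (card_fiber_eq c)
  exact ⟨e, funext fun a ↦ (Equiv.ofFiberEquiv_map _ a).symm⟩

section Chi

variable {ι : Type*} [Fintype ι]

theorem chi_zero_left (x : ι → ZMod 2) : chi 0 x = 1 := by
  simp [chi]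

theorem chi_add_left (a b x : ι → ZMod 2) : chi (a + b) x = chi a x * chi b x := by
  have sign_add : ∀ u v : ZMod 2, (if u + v = 0 then (1 : ℤ) else -1) =
      (if u = 0 then 1 else -1) * if v = 0 then 1 else -1 := by decide
  simp only [chi, Pi.add_apply, add_mul, Finset.sum_add_distrib, sign_add]

theorem chi_single_left [DecidableEq ι] (i : ι) (x : ι → ZMod 2) :
    chi (Pi.single i 1) x = if x i = 0 then 1 else -1 := by
  simp [chi, Pi.single_apply]

/-- The map `a ↦ χ(a, x)` as an additive character of `𝔽₂^ι`, which makes the orthogonality of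
characters available for `chi`. -/
def chiAddChar (x : ι → ZMod 2) : AddChar (ι → ZMod 2) ℤ where
  toFun a := chi a x
  map_zero_eq_one' := chi_zero_left x
  map_add_eq_mul' a b := chi_add_left a b x

theorem chiAddChar_apply (x a : ι → ZMod 2) : chiAddChar x a = chi a x := rfl

theorem chiAddChar_injective : Function.Injective (chiAddChar (ι := ι)) := by
  classical
  intro x y h
  have sign_injective : ∀ u v : ZMod 2,
      (if u = 0 then (1 : ℤ) else -1) = (if v = 0 then 1 else -1) → u = v := by decide
  funext i
  apply sign_injective
  simpa only [chiAddChar_apply, chi_single_left] using DFunLike.congr_fun h (Pi.single i 1)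

theorem map_chiAddChar_map_univ_ne {J : Type*} [Fintype J] {x x' : J → ι → ZMod 2}
    (h : ¬ ∃ σ : Equiv.Perm J, x' = x ∘ σ) :
    (Finset.univ.val.map x).map chiAddChar ≠ (Finset.univ.val.map x').map chiAddChar :=
  fun heq ↦ h <| exists_equiv_eq_comp_of_map_univ_eq
    (Multiset.map_injective chiAddChar_injective heq).symm

end Chi

/-- If the tuples `x, x'` are not equal as multisets, then the set of `a ∈ 𝔽₂ⁿ` where
`∑_j χ(a, x_j) = ∑_j χ(a, x'_j)` has size at most `(1 - 1/(2t))·2ⁿ`. -/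
theorem stmt0 (n t : ℕ) (hn : 1 ≤ n) (ht : 1 ≤ t)
    (x x' : Fin t → (Fin n → ZMod 2))
    (hne : ¬ ∃ σ : Equiv.Perm (Fin t), x' = x ∘ σ) :
    2 * t * (Finset.univ.filter
      (fun a : Fin n → ZMod 2 =>
        (∑ j, chi a (x j)) = ∑ j, chi a (x' j))).card ≤ (2 * t - 1) * 2 ^ n := by
  simpa [← two_mul, chiAddChar_apply, Finset.sum_eq_multiset_sum, Function.comp_def] using
    stmt0_general (map_chiAddChar_map_univ_ne hne)
end

section
/- Let t > 1 and n ≥ 1 be integers, let σ be a permutation of Fin t that is a single t-cycle (a cycle whose support is all of Fin t), and let z : Fin t → 𝔽₂ⁿ be a tuple that is not constant. Then ∑_{w : Fin t → 𝔽₂ⁿ} ∏_{i ∈ Fin t} χ(w_i + w_{σ(i)}, z_i) = 0, where the sum (in ℤ) ranges over all 2^{nt} tuples w. -/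
/-!
Moving the cyclic shift from `w` to `z` turns each summand into `∏ i, χ(w i, z i + z (σ⁻¹ i))`, so
the sum factors into a product of complete character sums. By orthogonality, a factor vanishes as
soon as `z i ≠ z (σ⁻¹ i)`, and some `i` satisfies this unless `z` is constant along the cycles
of `σ`.
-/

section Character

variable {ι : Type*} [Fintype ι]

theorem chi_comm (a x : ι → ZMod 2) : chi a x = chi x a := by
  simp only [chi, mul_comm]

theorem chi_add_right (a x y : ι → ZMod 2) : chi a (x + y) = chi a x * chi a y := by
  simp only [chi_comm a, chi_add_left]

theorem chi_single_one [DecidableEq ι] (k : ι) (x : ι → ZMod 2) :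
    chi (Pi.single k 1) x = if x k = 0 then 1 else -1 := by
  simp [chi, Pi.single_apply]

theorem chiAddChar_ne_one {x : ι → ZMod 2} (hx : x ≠ 0) : chiAddChar x ≠ 1 := by
  classical
  obtain ⟨k, hk⟩ : ∃ k, x k ≠ 0 := Function.ne_iff.mp hx
  refine AddChar.ne_one_iff.mpr ⟨Pi.single k 1, ?_⟩
  change chi (Pi.single k 1) x ≠ 1
  rw [chi_single_one, if_neg hk]
  decide

theorem sum_chi_eq_zero [DecidableEq ι] {x : ι → ZMod 2} (hx : x ≠ 0) : ∑ a, chi a x = 0 :=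
  AddChar.sum_eq_zero_of_ne_one (chiAddChar_ne_one hx)

end Character

section Permutation

variable {κ ι : Type*} [Fintype κ] [Fintype ι]

theorem prod_chi_add_comp_perm (σ : Equiv.Perm κ) (w z : κ → ι → ZMod 2) :
    ∏ i, chi (w i + w (σ i)) (z i) = ∏ i, chi (w i) (z i + z (σ.symm i)) := by
  have shift : ∏ i, chi (w (σ i)) (z i) = ∏ i, chi (w i) (z (σ.symm i)) := by
    simpa only [Equiv.symm_apply_apply] using
      Equiv.prod_comp σ fun i ↦ chi (w i) (z (σ.symm i))
  simp only [chi_add_left, chi_add_right, Finset.prod_mul_distrib, shift]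

theorem sum_prod_chi_add_comp_perm [DecidableEq κ] [DecidableEq ι] (σ : Equiv.Perm κ)
    (z : κ → ι → ZMod 2) :
    ∑ w : κ → ι → ZMod 2, ∏ i, chi (w i + w (σ i)) (z i) =
      ∏ i, ∑ a, chi a (z i + z (σ.symm i)) := by
  simp only [prod_chi_add_comp_perm, Fintype.prod_sum]

theorem stmt5_general [DecidableEq κ] [DecidableEq ι] (σ : Equiv.Perm κ) (z : κ → ι → ZMod 2)
    (hz : z ∘ σ ≠ z) :
    ∑ w : κ → ι → ZMod 2, ∏ i, chi (w i + w (σ i)) (z i) = 0 := by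
  obtain ⟨j, hj⟩ : ∃ j, z (σ j) ≠ z j := Function.ne_iff.mp hz
  have shifted_ne_zero : z (σ j) + z (σ.symm (σ j)) ≠ 0 := by
    rwa [Equiv.symm_apply_apply, ← ZModModule.sub_eq_add, sub_ne_zero]
  rw [sum_prod_chi_add_comp_perm]
  exact Finset.prod_eq_zero (Finset.mem_univ (σ j)) (sum_chi_eq_zero shifted_ne_zero)

end Permutation

theorem apply_eq_of_comp_perm_eq_of_sameCycle {α β : Type*} {σ : Equiv.Perm α} {f : α → β}
    (hf : f ∘ σ = f) {a b : α} (hab : σ.SameCycle a b) : f a = f b := by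
  have apply_perm (x : α) : f (σ x) = f x := congrFun hf x
  obtain ⟨m, rfl⟩ := hab
  induction m with
  | zero => simp
  | succ m ih => rw [add_comm, zpow_add, zpow_one, Equiv.Perm.mul_apply, apply_perm, ih]
  | pred m ih =>
    rw [ih, ← apply_perm ((σ ^ (-(m : ℤ) - 1)) a), ← Equiv.Perm.mul_apply, ← zpow_one_add,
      add_sub_cancel]

theorem sameCycle_of_isCycle_of_support_eq_univ {α : Type*} [Fintype α] [DecidableEq α]
    {σ : Equiv.Perm α} (hσ : σ.IsCycle) (hsupp : σ.support = Finset.univ) (a b : α) :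
    σ.SameCycle a b := by
  have apply_ne (x : α) : σ x ≠ x :=
    Equiv.Perm.mem_support.mp (hsupp ▸ Finset.mem_univ x)
  exact hσ.sameCycle (apply_ne a) (apply_ne b)

/-- For a single `t`-cycle `σ` and a non-constant tuple `z`, the sum over all tuples `w` of
`∏_i χ(w_i ⊕ w_{σ(i)}, z_i)` vanishes. -/
theorem stmt5 (n t : ℕ) (hn : 1 ≤ n) (ht : 1 < t)
    (σ : Equiv.Perm (Fin t)) (hσ : σ.IsCycle ∧ σ.support = Finset.univ)
    (z : Fin t → (Fin n → ZMod 2)) (hz : ¬ ∀ i j, z i = z j) :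
    ∑ w : Fin t → (Fin n → ZMod 2), ∏ i, chi (w i + w (σ i)) (z i) = 0 :=
  stmt5_general σ z fun hinv ↦ hz fun i j ↦ apply_eq_of_comp_perm_eq_of_sameCycle hinv
    (sameCycle_of_isCycle_of_support_eq_univ hσ.1 hσ.2 i j)
end

section
/- Let n ≥ 1, t ≥ 1 and q > 2t be integers, and let x, x′ : Fin t → 𝔽₂ⁿ be tuples. Then (1/q^{2ⁿ}) · ∑_{φ : 𝔽₂ⁿ → Fin q} e_q( ∑_{j ∈ Fin t} ( φ(x_j) − φ(x′_j) ) ) equals 1 if x and x′ are equal as multisets (x′ = x ∘ σ for some permutation σ of Fin t) and equals 0 otherwise, where the φ-values are lifted to ℤ in the exponent. -/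
/-- `e_q(s) = exp(2πi·s/q)`. -/
noncomputable def expq (q : ℕ) (s : ℤ) : ℂ :=
  Complex.exp (2 * Real.pi * Complex.I * s / q)

/-!
Collecting equal entries, the exponent is `∑ y, (m y - m' y) * φ y`, where `m` and `m'` are the
multiplicity functions of `x` and `x'`. The average over `φ` therefore factors over `y` into
averages of characters of `ℤ/q`, and by orthogonality it is the indicator of `m ≡ m'` modulo `q`.
Multiplicities are at most `t < q`, so this congruence is an equality, and tuples with equal
multiplicities differ by a permutation matching their fibers.
-/

section Orthogonality

lemma expq_sum (q : ℕ) {ι : Type*} (s : Finset ι) (f : ι → ℤ) :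
    expq q (∑ i ∈ s, f i) = ∏ i ∈ s, expq q (f i) := by
  simp only [expq, ← Complex.exp_sum, Int.cast_sum, Finset.mul_sum, Finset.sum_div]

variable (q : ℕ) [NeZero q]

lemma expq_eq_stdAddChar (s : ℤ) : expq q s = ZMod.stdAddChar (s : ZMod q) :=
  (ZMod.stdAddChar_coe s).symm

lemma sum_expq_mul (c : ℤ) :
    ∑ k : Fin q, expq q (c * (k : ℕ)) = if (q : ℤ) ∣ c then (q : ℂ) else 0 := by
  have hcast (k : Fin q) : ZMod.finEquiv q k = ((k : ℕ) : ZMod q) := by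
    obtain _ | m := q
    · exact k.elim0
    · exact (Fin.cast_val_eq_self k).symm
  calc ∑ k : Fin q, expq q (c * (k : ℕ))
      = ∑ k : Fin q, ZMod.stdAddChar (ZMod.finEquiv q k * (c : ZMod q)) := by
        simp only [expq_eq_stdAddChar, hcast, Int.cast_mul, Int.cast_natCast, mul_comm]
    _ = ∑ a : ZMod q, ZMod.stdAddChar (a * (c : ZMod q)) :=
        (ZMod.finEquiv q).toEquiv.sum_comp fun a ↦ ZMod.stdAddChar (a * (c : ZMod q))
    _ = if (q : ℤ) ∣ c then (q : ℂ) else 0 := by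
        simp only [AddChar.sum_mulShift _ (ZMod.isPrimitive_stdAddChar q), ZMod.card,
          ZMod.intCast_zmod_eq_zero_iff_dvd, Nat.cast_ite, Nat.cast_zero]

lemma sum_expq_sum_mul {Y : Type*} [Fintype Y] [DecidableEq Y] (c : Y → ℤ) :
    ∑ φ : Y → Fin q, expq q (∑ y, c y * (φ y : ℕ)) =
      if ∀ y, (q : ℤ) ∣ c y then (q : ℂ) ^ Fintype.card Y else 0 := by
  calc ∑ φ : Y → Fin q, expq q (∑ y, c y * (φ y : ℕ))
      = ∏ y, ∑ k : Fin q, expq q (c y * (k : ℕ)) := by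
        simp only [expq_sum, Fintype.prod_sum]
    _ = if ∀ y, (q : ℤ) ∣ c y then (q : ℂ) ^ Fintype.card Y else 0 := by
        simp only [sum_expq_mul, Fintype.prod_ite_zero, Finset.prod_const, Finset.card_univ]

end Orthogonality

section Multiplicity

open Finset

variable {ι Y : Type*} [Fintype ι] [DecidableEq Y]

lemma exists_eq_comp_perm_iff_card_fiber_eq (x x' : ι → Y) :
    (∃ σ : Equiv.Perm ι, x' = x ∘ σ) ↔ ∀ y, #{i | x i = y} = #{i | x' i = y} := by
  constructor
  · rintro ⟨σ, rfl⟩ y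
    exact (card_equiv σ (by simp)).symm
  · intro h
    let e (y : Y) : {i // x' i = y} ≃ {i // x i = y} :=
      Fintype.equivOfCardEq (by simp only [Fintype.card_subtype, h])
    exact ⟨Equiv.ofFiberEquiv e, funext fun i ↦ (Equiv.ofFiberEquiv_map e i).symm⟩

lemma sum_comp_eq_sum_card_fiber_mul [Fintype Y] {R : Type*} [NonAssocSemiring R]
    (x : ι → Y) (f : Y → R) :
    ∑ i, f (x i) = ∑ y, (#{i | x i = y} : R) * f y := by
  simp only [← sum_fiberwise' univ x f, sum_const, nsmul_eq_mul]

lemma average_expq_sum_sub [Fintype Y] (q : ℕ) [NeZero q] (x x' : ι → Y) :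
    (1 / (q : ℂ) ^ Fintype.card Y) *
      ∑ φ : Y → Fin q, expq q (∑ i, (((φ (x i) : ℕ) : ℤ) - ((φ (x' i) : ℕ) : ℤ)))
      = if ∀ y, #{i | x i = y} ≡ #{i | x' i = y} [MOD q] then 1 else 0 := by
  have hq : (q : ℂ) ^ Fintype.card Y ≠ 0 := pow_ne_zero _ (NeZero.ne _)
  have collect (φ : Y → Fin q) :
      ∑ i, (((φ (x i) : ℕ) : ℤ) - ((φ (x' i) : ℕ) : ℤ)) =
        ∑ y, ((#{i | x i = y} : ℤ) - #{i | x' i = y}) * (φ y : ℕ) := by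
    simp only [sum_sub_distrib, sub_mul,
      sum_comp_eq_sum_card_fiber_mul _ fun y ↦ ((φ y : ℕ) : ℤ)]
  simp only [collect, sum_expq_sum_mul, ← Nat.modEq_iff_dvd, Nat.ModEq.comm, mul_ite, mul_zero,
    one_div_mul_cancel hq]

end Multiplicity

theorem stmt7_general {ι Y : Type*} [Fintype ι] [DecidableEq ι] [Fintype Y] [DecidableEq Y]
    (q : ℕ) (hq : Fintype.card ι < q) (x x' : ι → Y) :
    (1 / (q : ℂ) ^ Fintype.card Y) *
      ∑ φ : Y → Fin q, expq q (∑ i, (((φ (x i) : ℕ) : ℤ) - ((φ (x' i) : ℕ) : ℤ)))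
      = if ∃ σ : Equiv.Perm ι, x' = x ∘ σ then 1 else 0 := by
  have : NeZero q := ⟨by omega⟩
  have card_fiber_lt (z : ι → Y) (y : Y) : Finset.card {i | z i = y} < q :=
    (Finset.card_le_univ _).trans_lt hq
  have modEq_iff (y : Y) : Finset.card {i | x i = y} ≡ Finset.card {i | x' i = y} [MOD q] ↔
      Finset.card {i | x i = y} = Finset.card {i | x' i = y} :=
    ⟨fun h ↦ h.eq_of_lt_of_lt (card_fiber_lt x y) (card_fiber_lt x' y), fun h ↦ h ▸ rfl⟩
  simp only [average_expq_sum_sub, modEq_iff, exists_eq_comp_perm_iff_card_fiber_eq]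

/-- The `(x,x')` diagonal entry of the `t`-th moment operator of a uniformly random diagonal
unitary with `q`-th-root-of-unity phases (`q > 2t`) is the indicator that `x` and `x'` are
permutation-related. -/
theorem stmt7 (n t q : ℕ) (hn : 1 ≤ n) (ht : 1 ≤ t) (hq : 2 * t < q)
    (x x' : Fin t → (Fin n → ZMod 2)) :
    (1 / (q : ℂ) ^ (2 ^ n)) *
      ∑ φ : (Fin n → ZMod 2) → Fin q,
        expq q (∑ j, (((φ (x j) : ℕ) : ℤ) - ((φ (x' j) : ℕ) : ℤ)))
      = if ∃ σ : Equiv.Perm (Fin t), x' = x ∘ σ then 1 else 0 := by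
  have card_strings : Fintype.card (Fin n → ZMod 2) = 2 ^ n := by simp
  simpa only [card_strings] using stmt7_general q (by rw [Fintype.card_fin]; omega) x x'
end

section
/- Let n = 2ν be an even integer with ν ≥ 1, let m ≥ 1 be an integer, and let A : Fin m → 𝔽₂ⁿ and θ : Fin m → ℝ be arbitrary. Define the 2^ν × 2^ν complex partition matrix Λ indexed by pairs (a, b) ∈ 𝔽₂^ν × 𝔽₂^ν via Λ_{a,b} := ∏_{r ∈ Fin m} Complex.exp( i·θ_r · χ(A_r, (a,b)) ), where (a,b) ∈ 𝔽₂ⁿ denotes the concatenation of a and b. Then the rank of Λ (equivalently, of the reduced density matrix 2^{−n} Λ Λ† of the Hamiltonian phase state across the half cut) is at most 16^m. -/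
/-- The partition matrix `Λ_{a,b} = ∏_r exp(i·θ_r·χ(A_r, (a,b)))` of the Hamiltonian phase
state across the half cut; here `n = 2ν` and `(a,b)` is the concatenation of `a, b`. -/
noncomputable def lam (ν m : ℕ) (A : Fin m → ((Fin ν ⊕ Fin ν) → ZMod 2))
    (θ : Fin m → ℝ) : Matrix (Fin ν → ZMod 2) (Fin ν → ZMod 2) ℂ :=
  Matrix.of fun a b =>
    ∏ r, Complex.exp (Complex.I * (θ r : ℂ) * (chi (A r) (Sum.elim a b) : ℂ))

/-!
Since `A (a, b) = A₁ a + A₂ b` for the two halves `A₁`, `A₂` of the architecture matrix `A`, the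
entry `Λ_{a,b}` is a function `Φ (A₁ a + A₂ b)` of a vector of `m` bits. So `Λ` arises from the
`2^m × 2^m` matrix `(Φ (s + t))_{s,t}` by selecting and repeating rows and columns, and has rank at
most `2^m`.
-/

section RankBound

open scoped Matrix

variable {ι κ σ : Type*} [Fintype ι] [Fintype κ]

theorem of_comp_mulVec_sumElim_eq_submatrix {F R : Type*} [Semiring F] (Φ : (σ → F) → R)
    (A : Matrix σ (ι ⊕ κ) F) :
    (Matrix.of fun (a : ι → F) (b : κ → F) => Φ (A *ᵥ Sum.elim a b)) =
      (Matrix.of fun s t => Φ (s + t)).submatrix (A.toCols₁ *ᵥ ·) (A.toCols₂ *ᵥ ·) := by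
  ext a b
  simp only [Matrix.of_apply, Matrix.submatrix_apply]
  rw [← Matrix.fromCols_mulVec_sumElim, Matrix.fromCols_toCols]

variable [Fintype σ]

theorem rank_of_comp_mulVec_sumElim_le {F R : Type*} [DecidableEq κ] [Semiring F] [Fintype F]
    [CommSemiring R] [StrongRankCondition R] (Φ : (σ → F) → R) (A : Matrix σ (ι ⊕ κ) F) :
    (Matrix.of fun (a : ι → F) (b : κ → F) => Φ (A *ᵥ Sum.elim a b)).rank ≤
      Fintype.card F ^ Fintype.card σ := by
  classical
  rw [of_comp_mulVec_sumElim_eq_submatrix]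
  calc
    _ ≤ (Matrix.of fun s t : σ → F => Φ (s + t)).rank := Matrix.rank_submatrix_le _ _ _
    _ ≤ Fintype.card (σ → F) := Matrix.rank_le_card_height _
    _ = Fintype.card F ^ Fintype.card σ := Fintype.card_fun

/-- The phase `∏_r exp(i·θ_r·χ(A_r, x))` of a basis state `x`, encoded as a function of the vector `s`
of parities `s r = ⟨A_r, x⟩`: it depends on `x` only through them. -/
noncomputable def parityPhase (θ : σ → ℂ) (s : σ → ZMod 2) : ℂ :=
  ∏ r, Complex.exp (Complex.I * θ r * ((if s r = 0 then 1 else -1 : ℤ) : ℂ))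

theorem prod_exp_chi_eq_parityPhase_mulVec (θ : σ → ℂ) (A : σ → ι → ZMod 2) (x : ι → ZMod 2) :
    ∏ r, Complex.exp (Complex.I * θ r * (chi (A r) x : ℂ)) =
      parityPhase θ (Matrix.of A *ᵥ x) :=
  rfl

theorem stmt11_general [DecidableEq κ] (A : σ → ι ⊕ κ → ZMod 2) (θ : σ → ℂ) :
    (Matrix.of fun (a : ι → ZMod 2) (b : κ → ZMod 2) =>
      ∏ r, Complex.exp (Complex.I * θ r * (chi (A r) (Sum.elim a b) : ℂ))).rank ≤
      2 ^ Fintype.card σ := by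
  simpa only [prod_exp_chi_eq_parityPhase_mulVec, ZMod.card] using
    rank_of_comp_mulVec_sumElim_le (parityPhase θ) (Matrix.of A)

end RankBound

/-- The rank of the partition matrix of a Hamiltonian phase state with `m` terms across the
half cut is at most `16^m`. -/
theorem stmt11 (ν m : ℕ) (hν : 1 ≤ ν) (hm : 1 ≤ m)
    (A : Fin m → ((Fin ν ⊕ Fin ν) → ZMod 2)) (θ : Fin m → ℝ) :
    (lam ν m A θ).rank ≤ 16 ^ m := by
  simpa only [lam, Fintype.card_fin] using
    (stmt11_general A fun r => (θ r : ℂ)).trans (Nat.pow_le_pow_left (by norm_num : 2 ≤ 16) _)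
end

section
/- Let n ≥ 1 and m ≥ 1 be integers, let R be an invertible n × n matrix over ZMod 2, let A : Fin m → 𝔽₂ⁿ be a list of architecture rows, and let θ : Fin m → ℝ. Let P be the complex permutation matrix indexed by 𝔽₂ⁿ with P_{x,y} := 1 if y = R·x (matrix–vector product over ZMod 2) and 0 otherwise, and let D^{A}_θ be the diagonal complex matrix indexed by 𝔽₂ⁿ with diagonal entries (D^{A}_θ)_{x,x} := Complex.exp( i · ∑_{r ∈ Fin m} θ_r · χ(A_r, x) ). Then P · D^{A}_θ · P† = D^{A·R}_θ, where the r-th row of A·R is the vector x ↦ ∑_j (A_r)_j · R_{j,x} over ZMod 2 (i.e., the row vector A_r multiplied by R). -/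
/-- The permutation matrix `P_{x,y} = [y = R·x]` implementing the basis permutation
`|x⟩ ↦ |R⁻¹ x⟩` of a CNOT circuit. -/
def permMat (n : ℕ) (R : Matrix (Fin n) (Fin n) (ZMod 2)) :
    Matrix (Fin n → ZMod 2) (Fin n → ZMod 2) ℂ :=
  Matrix.of fun x y => if y = R.mulVec x then 1 else 0

/-- The diagonal phase matrix `D^A_θ` with entries `exp(i ∑_r θ_r χ(A_r, x))`. -/
noncomputable def diagMat (n m : ℕ) (A : Fin m → (Fin n → ZMod 2)) (θ : Fin m → ℝ) :
    Matrix (Fin n → ZMod 2) (Fin n → ZMod 2) ℂ :=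
  Matrix.diagonal fun x => Complex.exp (Complex.I * ∑ r, (θ r : ℂ) * (chi (A r) x : ℂ))

/-!
Conjugating by `P` relabels both rows and columns along `x ↦ R x`, so it turns a diagonal matrix
with entries `d x` into the one with entries `d (R x)`; off-diagonal entries stay zero because
`R` is injective. For `D^A_θ` the new entries are those of `D^{A·R}_θ`, since the pairing satisfies
`⟨a R, x⟩ = ⟨a, R x⟩`.
-/

section

open Matrix

theorem one_submatrix_mul_mul_conjTranspose {α β S : Type*} [Fintype β] [DecidableEq β]
    [NonAssocSemiring S] [StarRing S] (f : α → β) (M : Matrix β β S) :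
    (1 : Matrix β β S).submatrix f id * M * ((1 : Matrix β β S).submatrix f id)ᴴ =
      M.submatrix f f := by
  have row_selection : (1 : Matrix β β S).submatrix f id * M = M.submatrix f id :=
    one_submatrix_mul f (Equiv.refl β) M
  have column_selection :
      M.submatrix f id * (1 : Matrix β β S).submatrix id f = M.submatrix f f :=
    mul_submatrix_one (Equiv.refl β) f (M.submatrix f id)
  rw [conjTranspose_submatrix, conjTranspose_one, row_selection, column_selection]

theorem permMat_eq_one_submatrix {n : ℕ} (R : Matrix (Fin n) (Fin n) (ZMod 2)) :
    permMat n R = (1 : Matrix (Fin n → ZMod 2) (Fin n → ZMod 2) ℂ).submatrix R.mulVec id := by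
  ext x y
  simp only [permMat, of_apply, submatrix_apply, one_apply, id_eq, eq_comm]

theorem permMat_mul_mul_conjTranspose {n : ℕ} (R : Matrix (Fin n) (Fin n) (ZMod 2))
    (M : Matrix (Fin n → ZMod 2) (Fin n → ZMod 2) ℂ) :
    permMat n R * M * (permMat n R)ᴴ = M.submatrix R.mulVec R.mulVec := by
  rw [permMat_eq_one_submatrix, one_submatrix_mul_mul_conjTranspose]

theorem chi_vecMul {ι κ : Type*} [Fintype ι] [Fintype κ] (a : ι → ZMod 2)
    (R : Matrix ι κ (ZMod 2)) (x : κ → ZMod 2) :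
    chi (a ᵥ* R) x = chi a (R *ᵥ x) := by
  have adjoint : ∑ j, (a ᵥ* R) j * x j = ∑ i, a i * (R *ᵥ x) i :=
    (dotProduct_mulVec a R x).symm
  rw [chi, chi, adjoint]

theorem diagMat_vecMul {n k m : ℕ} {R : Matrix (Fin n) (Fin k) (ZMod 2)}
    (A : Fin m → Fin n → ZMod 2) (θ : Fin m → ℝ) (hR : Function.Injective R.mulVec) :
    diagMat k m (fun r => A r ᵥ* R) θ = (diagMat n m A θ).submatrix R.mulVec R.mulVec := by
  simp only [diagMat, submatrix_diagonal _ _ hR, chi_vecMul, Function.comp_def]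

end

/-- Conjugating the diagonal phase matrix `D^A_θ` by the CNOT-circuit permutation unitary `P`
re-randomizes the architecture: `P · D^A_θ · P† = D^{A·R}_θ`, where the `r`-th row of `A·R`
is the row vector `A_r` multiplied by `R`. -/
theorem stmt12 (n m : ℕ) (hn : 1 ≤ n) (hm : 1 ≤ m)
    (R : Matrix (Fin n) (Fin n) (ZMod 2)) (hR : IsUnit R)
    (A : Fin m → (Fin n → ZMod 2)) (θ : Fin m → ℝ) :
    permMat n R * diagMat n m A θ * (permMat n R).conjTranspose =
      diagMat n m (fun r => Matrix.vecMul (A r) R) θ := by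
  rw [permMat_mul_mul_conjTranspose, diagMat_vecMul A θ (Matrix.mulVec_injective_of_isUnit hR)]
end

section
/- Let α and β be nonempty finite types, let ρ be a complex matrix indexed by α × β that is positive semidefinite with trace 1, and let Λ be a complex matrix indexed by β that is an orthogonal projection (Λ is Hermitian and Λ·Λ = Λ). Write 1⊗Λ for the matrix with entries (1⊗Λ)_{(a,b),(a′,b′)} := (if a = a′ then Λ_{b,b′} else 0), and for a matrix M indexed by α × β define its partial trace over β as the α-indexed matrix Tr_β(M)_{a,a′} := ∑_{b} M_{(a,b),(a′,b)}. Then the matrix Tr_β(ρ) − Tr_β((1⊗Λ)·ρ·(1⊗Λ)) is positive semidefinite, and its trace equals 1 − Tr((1⊗Λ)·ρ); consequently its trace norm equals 1 − Tr((1⊗Λ)·ρ). -/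
open scoped ComplexOrder

/-- The trace norm of a square complex matrix: the sum of its singular values, i.e. of the
square roots of the eigenvalues of `Mᴴ·M`. -/
noncomputable def traceNorm {k : Type*} [Fintype k] [DecidableEq k] (M : Matrix k k ℂ) : ℝ :=
  ∑ i, Real.sqrt ((Matrix.posSemidef_conjTranspose_mul_self M).1.eigenvalues i)

/-- The operator `1 ⊗ Λ` on the bipartite space, with entries
`(1⊗Λ)_{(a,b),(a',b')} = [a = a']·Λ_{b,b'}`. -/
def oneTensor {α β : Type*} [DecidableEq α] (Λ : Matrix β β ℂ) :
    Matrix (α × β) (α × β) ℂ :=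
  Matrix.of fun p p' => if p.1 = p'.1 then Λ p.2 p'.2 else 0

/-- The partial trace over the second factor `β`. -/
noncomputable def ptraceB {α β : Type*} [Fintype β] (M : Matrix (α × β) (α × β) ℂ) :
    Matrix α α ℂ :=
  Matrix.of fun a a' => ∑ b, M (a, b) (a', b)

/-!
The partial trace over `β` is cyclic with respect to operators acting on `β` alone. Hence, for
every operator `K` on `β`,
`Tr_β ρ - Tr_β((1 ⊗ K) ρ (1 ⊗ K)ᴴ) = Tr_β((1 ⊗ (1 - Kᴴ K)) ρ)`.
If `K` is a contraction, then `1 - Kᴴ K = Lᴴ L` for some `L`, and cyclicity turns the right-hand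
side into `Tr_β((1 ⊗ L) ρ (1 ⊗ L)ᴴ)`, which is positive semidefinite, so that its trace norm is its
trace. A projector `Λ` is the case `K = Λ = Kᴴ K`.
-/

section

open Matrix
open scoped Kronecker MatrixOrder

section Spectral

variable {k 𝕜 : Type*} [RCLike 𝕜] [Fintype k] [DecidableEq k]

theorem posSemidef_one_sub_of_isStarProjection {P : Matrix k k 𝕜} (hP : IsStarProjection P) :
    (1 - P).PosSemidef :=
  hP.one_sub_nonneg.posSemidef

theorem trace_cfc_eq_sum_eigenvalues {A : Matrix k k 𝕜} (hA : A.IsHermitian) (f : ℝ → ℝ) :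
    (cfc f A).trace = ∑ i, (f (hA.eigenvalues i) : 𝕜) := by
  rw [hA.cfc_eq, IsHermitian.cfc, Unitary.conjStarAlgAut_apply, trace_mul_cycle,
    Unitary.coe_star_mul_self, one_mul, trace_diagonal]
  rfl

theorem ofReal_traceNorm_eq_trace_abs (M : Matrix k k ℂ) :
    (traceNorm M : ℂ) = (CFC.abs M).trace := by
  have hM : (Mᴴ * M).PosSemidef := posSemidef_conjTranspose_mul_self M
  rw [CFC.abs, star_eq_conjTranspose, CFC.sqrt_eq_real_sqrt _ hM.nonneg, cfcₙ_eq_cfc,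
    trace_cfc_eq_sum_eigenvalues hM.isHermitian, traceNorm, Complex.ofReal_sum]
  rfl

theorem ofReal_traceNorm_of_posSemidef {M : Matrix k k ℂ} (hM : M.PosSemidef) :
    (traceNorm M : ℂ) = M.trace := by
  rw [ofReal_traceNorm_eq_trace_abs, CFC.abs_of_nonneg M hM.nonneg]

end Spectral

section OneTensor

variable {α β : Type*} [DecidableEq α]

theorem oneTensor_eq_one_kronecker (X : Matrix β β ℂ) :
    oneTensor X = (1 : Matrix α α ℂ) ⊗ₖ X := by
  ext p q
  simp [oneTensor, one_apply]

theorem oneTensor_one [DecidableEq β] : (oneTensor 1 : Matrix (α × β) (α × β) ℂ) = 1 := by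
  rw [oneTensor_eq_one_kronecker, one_kronecker_one]

theorem oneTensor_sub (X Y : Matrix β β ℂ) :
    (oneTensor (X - Y) : Matrix (α × β) (α × β) ℂ) = oneTensor X - oneTensor Y := by
  ext p q
  by_cases h : p.1 = q.1 <;> simp [oneTensor, h]

theorem oneTensor_mul [Fintype α] [Fintype β] (X Y : Matrix β β ℂ) :
    (oneTensor (X * Y) : Matrix (α × β) (α × β) ℂ) = oneTensor X * oneTensor Y := by
  simp only [oneTensor_eq_one_kronecker, ← mul_kronecker_mul, one_mul]

theorem conjTranspose_oneTensor (X : Matrix β β ℂ) :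
    (oneTensor X : Matrix (α × β) (α × β) ℂ)ᴴ = oneTensor Xᴴ := by
  simp only [oneTensor_eq_one_kronecker, conjTranspose_kronecker, conjTranspose_one]

end OneTensor

section PartialTrace

variable {α β : Type*} [Fintype β]

theorem ptraceB_eq_sum_submatrix (M : Matrix (α × β) (α × β) ℂ) :
    ptraceB M = ∑ b, M.submatrix (·, b) (·, b) := by
  ext a a'
  simp [ptraceB, Matrix.sum_apply]

theorem ptraceB_sub (M N : Matrix (α × β) (α × β) ℂ) :
    ptraceB (M - N) = ptraceB M - ptraceB N := by
  simp only [ptraceB_eq_sum_submatrix, submatrix_sub, Pi.sub_apply, Finset.sum_sub_distrib]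

theorem posSemidef_ptraceB {M : Matrix (α × β) (α × β) ℂ} (hM : M.PosSemidef) :
    (ptraceB M).PosSemidef := by
  rw [ptraceB_eq_sum_submatrix]
  exact posSemidef_sum _ fun b _ => hM.submatrix (·, b)

variable [Fintype α]

theorem trace_ptraceB (M : Matrix (α × β) (α × β) ℂ) : (ptraceB M).trace = M.trace := by
  simp only [trace, diag_apply, ptraceB, of_apply, Fintype.sum_prod_type]

variable [DecidableEq α]

theorem ptraceB_oneTensor_mul_comm (X : Matrix β β ℂ) (M : Matrix (α × β) (α × β) ℂ) :
    ptraceB (oneTensor X * M) = ptraceB (M * oneTensor X) := by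
  ext a a'
  have left : ptraceB (oneTensor X * M) a a' = ∑ b, ∑ c, X b c * M (a, c) (a', b) := by
    simp [ptraceB, oneTensor, mul_apply, Fintype.sum_prod_type_right]
  have right : ptraceB (M * oneTensor X) a a' = ∑ c, ∑ b, M (a, c) (a', b) * X b c := by
    simp [ptraceB, oneTensor, mul_apply, Fintype.sum_prod_type_right]
  rw [left, right, Finset.sum_comm]
  simp only [mul_comm]

theorem ptraceB_oneTensor_mul_mul_conjTranspose (K : Matrix β β ℂ) (M : Matrix (α × β) (α × β) ℂ) :
    ptraceB (oneTensor K * M * (oneTensor K)ᴴ) = ptraceB (oneTensor (Kᴴ * K) * M) := by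
  rw [conjTranspose_oneTensor, ← ptraceB_oneTensor_mul_comm, oneTensor_mul, mul_assoc]

theorem posSemidef_ptraceB_oneTensor_mul {E : Matrix β β ℂ} {ρ : Matrix (α × β) (α × β) ℂ}
    (hE : E.PosSemidef) (hρ : ρ.PosSemidef) : (ptraceB (oneTensor E * ρ)).PosSemidef := by
  classical
  obtain ⟨L, rfl⟩ := CStarAlgebra.nonneg_iff_eq_star_mul_self.mp hE.nonneg
  rw [star_eq_conjTranspose, ← ptraceB_oneTensor_mul_mul_conjTranspose]
  exact posSemidef_ptraceB (hρ.mul_mul_conjTranspose_same _)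

theorem ptraceB_sub_ptraceB_oneTensor_mul_mul_conjTranspose [DecidableEq β] (K : Matrix β β ℂ)
    (M : Matrix (α × β) (α × β) ℂ) :
    ptraceB M - ptraceB (oneTensor K * M * (oneTensor K)ᴴ) =
      ptraceB (oneTensor (1 - Kᴴ * K) * M) := by
  rw [ptraceB_oneTensor_mul_mul_conjTranspose, oneTensor_sub, oneTensor_one, sub_mul,
    one_mul, ptraceB_sub]

end PartialTrace

theorem stmt13_general {α β : Type*} [Fintype α] [Fintype β] [DecidableEq α] [DecidableEq β]
    {ρ : Matrix (α × β) (α × β) ℂ} (hρ : ρ.PosSemidef)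
    {K : Matrix β β ℂ} (hK : (1 - Kᴴ * K).PosSemidef) :
    (ptraceB ρ - ptraceB (oneTensor K * ρ * (oneTensor K)ᴴ)).PosSemidef ∧
    (ptraceB ρ - ptraceB (oneTensor K * ρ * (oneTensor K)ᴴ)).trace =
      ρ.trace - (oneTensor (Kᴴ * K) * ρ).trace ∧
    traceNorm (ptraceB ρ - ptraceB (oneTensor K * ρ * (oneTensor K)ᴴ)) =
      (ρ.trace - (oneTensor (Kᴴ * K) * ρ).trace).re := by
  have pos : (ptraceB ρ - ptraceB (oneTensor K * ρ * (oneTensor K)ᴴ)).PosSemidef := by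
    rw [ptraceB_sub_ptraceB_oneTensor_mul_mul_conjTranspose]
    exact posSemidef_ptraceB_oneTensor_mul hK hρ
  have trace_eq : (ptraceB ρ - ptraceB (oneTensor K * ρ * (oneTensor K)ᴴ)).trace =
      ρ.trace - (oneTensor (Kᴴ * K) * ρ).trace := by
    rw [trace_sub, ptraceB_oneTensor_mul_mul_conjTranspose, trace_ptraceB, trace_ptraceB]
  exact ⟨pos, trace_eq, by
    rw [← trace_eq, ← ofReal_traceNorm_of_posSemidef pos, Complex.ofReal_re]⟩

end

/-- Un-normalized gentle measurement lemma: for a state `ρ` on `α ⊗ β` and a projector `Λ`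
on `β`, the matrix `Tr_β(ρ) - Tr_β((1⊗Λ)ρ(1⊗Λ))` is positive semidefinite, its trace equals
`1 - Tr((1⊗Λ)ρ)`, and consequently its trace norm equals `1 - Tr((1⊗Λ)ρ)`. -/
theorem stmt13 {α β : Type*} [Fintype α] [Fintype β] [DecidableEq α] [DecidableEq β]
    [Nonempty α] [Nonempty β]
    (ρ : Matrix (α × β) (α × β) ℂ) (hρ : ρ.PosSemidef) (htr : ρ.trace = 1)
    (Λ : Matrix β β ℂ) (hΛ : Λ.IsHermitian) (hproj : Λ * Λ = Λ) :
    (ptraceB ρ - ptraceB (oneTensor Λ * ρ * oneTensor Λ)).PosSemidef ∧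
    (ptraceB ρ - ptraceB (oneTensor Λ * ρ * oneTensor Λ)).trace =
      1 - (oneTensor Λ * ρ).trace ∧
    traceNorm (ptraceB ρ - ptraceB (oneTensor Λ * ρ * oneTensor Λ)) =
      (1 - (oneTensor Λ * ρ).trace).re := by
  simpa only [conjTranspose_oneTensor, hΛ.eq, hproj, htr, Nat.cast_one] using stmt13_general hρ
    (K := Λ) (by simpa only [hΛ.eq, hproj] using posSemidef_one_sub_of_isStarProjection ⟨hproj, hΛ⟩)
end
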